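/- arXiv:1608.07366 — 3 statements merged into one kernel-verified Lean document; each statement's English description precedes it below -/
import Mathlib

section
/- Let Γ be a group and (ρ: A → G) a crossed module with Γ-action. For every pair (u,ψ) ∈ Z²(Γ, A→G) and every map w: Γ → A, the pair w*(u,ψ) = (u',ψ') defined by u'_{σ,τ} = w_{στ} · u_{σ,τ} · (^(ψ_σ)(ˢw_τ))⁻¹ · w_σ⁻¹ and ψ'_σ = ρ(w_σ) · ψ_σ again lies in Z²(Γ, A→G). -/
/-!
Write `X a = ψ σ • σ • a`. By the Peiffer identity, `ψ' σ` acts as `a ↦ w σ * X a * (w σ)⁻¹`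
after twisting by `σ`, so on the left of the new cocycle identity the factors `w σ` and `X (w (τυ))`
cancel. On the right, the relation `ψ (στ) = ρ (u σ τ) * ψ σ * σ • ψ τ` and the Peiffer identity
turn `ψ (στ) • στ • w υ` into the conjugate of `X (ψ τ • τ • w υ)` by `u σ τ`. Both sides then agree
by the cocycle identity for `u`. The relation for `ψ'` follows by applying `ρ` and cancelling.
-/

/-- The cocycle condition defining `Z²(Γ, A → G)` for a crossed module `ρ : A → G`
with `Γ`-action; all the actions are given as explicit functions:
`aA` is the action of `Γ` on `A`, `aG` that of `Γ` on `G`, `act` that of `G` on `A`. -/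
def IsZ2 {Γ A G : Type*} [Group Γ] [Group A] [Group G]
    (ρ : A → G) (aA : Γ → A → A) (aG : Γ → G → G) (act : G → A → A)
    (u : Γ → Γ → A) (ψ : Γ → G) : Prop :=
  (∀ σ τ υ : Γ, u σ (τ * υ) * act (ψ σ) (aA σ (u τ υ)) = u (σ * τ) υ * u σ τ) ∧
  (∀ σ τ : Γ, ψ (σ * τ) = ρ (u σ τ) * ψ σ * aG σ (ψ τ))

/-- For a crossed module `ρ : A → G` with `Γ`-action and `(u, ψ) ∈ Z²(Γ, A → G)`,
and any map `w : Γ → A`, the pair `w * (u, ψ) = (u', ψ')` given by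
`u' σ τ = w (στ) * u σ τ * (ψ σ • (σ • w τ))⁻¹ * (w σ)⁻¹` and `ψ' σ = ρ (w σ) * ψ σ`
again lies in `Z²(Γ, A → G)`. -/
theorem wStar_mem_Z2 {Γ A G : Type*} [Group Γ] [Group A] [Group G]
    [MulDistribMulAction Γ A] [MulDistribMulAction Γ G] [MulDistribMulAction G A]
    (ρ : A →* G)
    -- crossed module axioms
    (hpeiffer : ∀ a a' : A, a * a' * a⁻¹ = ρ a • a')
    (hρ_equiv : ∀ (g : G) (a : A), ρ (g • a) = g * ρ a * g⁻¹)
    -- Γ-action axioms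
    (hρ_Γ : ∀ (σ : Γ) (a : A), ρ (σ • a) = σ • ρ a)
    (hcompat : ∀ (σ : Γ) (g : G) (a : A), σ • (g • a) = (σ • g) • (σ • a))
    -- a cocycle and a cochain
    (u : Γ → Γ → A) (ψ : Γ → G)
    (hcoc : IsZ2 ρ (fun σ a => σ • a) (fun σ g => σ • g) (fun g a => g • a) u ψ)
    (w : Γ → A) :
    IsZ2 ρ (fun σ a => σ • a) (fun σ g => σ • g) (fun g a => g • a)
      (fun σ τ => w (σ * τ) * u σ τ * (ψ σ • (σ • w τ))⁻¹ * (w σ)⁻¹)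
      (fun σ => ρ (w σ) * ψ σ) := by
  obtain ⟨hu, hψ⟩ := hcoc
  -- the action of `ψ (στ)` twisted by `στ` is the composite twisted action, conjugated by `u σ τ`
  have hconj : ∀ σ τ υ : Γ, ψ (σ * τ) • (σ * τ) • w υ
      = u σ τ * ψ σ • σ • ψ τ • τ • w υ * (u σ τ)⁻¹ := by
    intro σ τ υ
    rw [hpeiffer, hcompat, hψ, mul_smul, mul_smul, mul_smul]
  refine ⟨fun σ τ υ => ?_, fun σ τ => ?_⟩
  · have h := hu σ τ υ
    simp only at h
    simp only [mul_smul (ρ (w σ)) (ψ σ), ← hpeiffer, hconj, smul_mul', smul_inv']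
    rw [eq_mul_inv_of_mul_eq h, mul_assoc σ τ υ]
    group
  · simp only [hψ σ τ, map_mul, map_inv, hρ_equiv, hρ_Γ, smul_mul']
    group
end

section
/- Let Γ be a group and (ρ: A → G) a crossed module with Γ-action. For every pair (u,ψ) ∈ Z²(Γ, A→G) and every g ∈ G, the pair g⋆(u,ψ) = (u'',ψ'') defined by u''_{σ,τ} = ᵍ(u_{σ,τ}) and ψ''_σ = g · ψ_σ · (ˢg)⁻¹ again lies in Z²(Γ, A→G). -/
/-- For a crossed module `ρ : A → G` with `Γ`-action, `(u, ψ) ∈ Z²(Γ, A → G)`,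
and any `g ∈ G`, the pair `g ⋆ (u, ψ) = (u'', ψ'')` given by
`u'' σ τ = g • u σ τ` and `ψ'' σ = g * ψ σ * (σ • g)⁻¹`
again lies in `Z²(Γ, A → G)`. -/
theorem gStar_mem_Z2 {Γ A G : Type*} [Group Γ] [Group A] [Group G]
    [MulDistribMulAction Γ A] [MulDistribMulAction Γ G] [MulDistribMulAction G A]
    (ρ : A →* G)
    -- crossed module axioms
    (hpeiffer : ∀ a a' : A, a * a' * a⁻¹ = ρ a • a')
    (hρ_equiv : ∀ (g : G) (a : A), ρ (g • a) = g * ρ a * g⁻¹)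
    -- Γ-action axioms
    (hρ_Γ : ∀ (σ : Γ) (a : A), ρ (σ • a) = σ • ρ a)
    (hcompat : ∀ (σ : Γ) (g : G) (a : A), σ • (g • a) = (σ • g) • (σ • a))
    -- a cocycle and an element of `G`
    (u : Γ → Γ → A) (ψ : Γ → G)
    (hcoc : IsZ2 ρ (fun σ a => σ • a) (fun σ g => σ • g) (fun g a => g • a) u ψ)
    (g : G) :
    IsZ2 ρ (fun σ a => σ • a) (fun σ g => σ • g) (fun g a => g • a)
      (fun σ τ => g • u σ τ)
      (fun σ => g * ψ σ * (σ • g)⁻¹) := by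
  obtain ⟨hu, hψ⟩ := hcoc
  refine ⟨fun σ τ υ => ?_, fun σ τ => ?_⟩
  · -- The factor `(σ • g)⁻¹` of `ψ'' σ` cancels against `σ • (g • a) = (σ • g) • (σ • a)`,
    -- so the new cocycle identity is `g` applied to the old one.
    have h := congrArg (fun a => g • a) (hu σ τ υ)
    simp only [smul_mul', ← mul_smul] at h
    simp only [hcompat, ← mul_smul, inv_mul_cancel_right]
    exact h
  · -- Both `g⁻¹ * g` and `(σ • g)⁻¹ * (σ • g)` telescope.
    have h := hψ σ τ
    simp only [h, hρ_equiv, smul_mul', smul_inv', mul_smul]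
    group
end

section
/- Let Γ be a group and (ρ: A → G) a crossed module with Γ-action. The formulas w*(u,ψ) and g⋆(u,ψ) define a left action of the semidirect product C¹(Γ, A→G) := Maps(Γ,A) ⋊ G on Z²(Γ, A→G), where G acts on the group Maps(Γ,A) pointwise by (g⋆w)_σ = ᵍ(w_σ). In particular, for all g ∈ G, w: Γ → A, and (u,ψ) ∈ Z²(Γ, A→G), one has g⋆(w*(u,ψ)) = (g⋆w)*(g⋆(u,ψ)), and both formulas satisfy the action axioms (1 acts trivially and (xy)·z = x·(y·z)). -/
/-- The operation `w * (u, ψ)` of `w : Γ → A` on 2-cochains. -/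
def wStar {Γ A G : Type*} [Group Γ] [Group A] [Group G]
    (ρ : A → G) (aA : Γ → A → A) (act : G → A → A)
    (w : Γ → A) (p : (Γ → Γ → A) × (Γ → G)) : (Γ → Γ → A) × (Γ → G) :=
  (fun σ τ => w (σ * τ) * p.1 σ τ * (act (p.2 σ) (aA σ (w τ)))⁻¹ * (w σ)⁻¹,
   fun σ => ρ (w σ) * p.2 σ)

/-- The operation `g ⋆ (u, ψ)` of `g : G` on 2-cochains. -/
def gStar {Γ A G : Type*} [Group Γ] [Group A] [Group G]
    (aG : Γ → G → G) (act : G → A → A)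
    (g : G) (p : (Γ → Γ → A) × (Γ → G)) : (Γ → Γ → A) × (Γ → G) :=
  (fun σ τ => act g (p.1 σ τ), fun σ => g * p.2 σ * (aG σ g)⁻¹)

/-- The formulas `w * (u, ψ)` and `g ⋆ (u, ψ)` define a left action of the semidirect
product `C¹(Γ, A → G) = Maps(Γ, A) ⋊ G` (where `G` acts on `Maps(Γ, A)` pointwise by
`(g ⋆ w) σ = g • (w σ)`) on `Z²(Γ, A → G)`: both operations preserve `Z²`, both satisfy
the left action axioms, and they satisfy the semidirect-product compatibility
`g ⋆ (w * (u, ψ)) = (g ⋆ w) * (g ⋆ (u, ψ))`. -/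
theorem semidirect_action_on_Z2 {Γ A G : Type*} [Group Γ] [Group A] [Group G]
    [MulDistribMulAction Γ A] [MulDistribMulAction Γ G] [MulDistribMulAction G A]
    (ρ : A →* G)
    -- crossed module axioms
    (hpeiffer : ∀ a a' : A, a * a' * a⁻¹ = ρ a • a')
    (hρ_equiv : ∀ (g : G) (a : A), ρ (g • a) = g * ρ a * g⁻¹)
    -- Γ-action axioms
    (hρ_Γ : ∀ (σ : Γ) (a : A), ρ (σ • a) = σ • ρ a)
    (hcompat : ∀ (σ : Γ) (g : G) (a : A), σ • (g • a) = (σ • g) • (σ • a)) :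
    -- the two operations preserve `Z²(Γ, A → G)`
    (∀ (w : Γ → A) (p : (Γ → Γ → A) × (Γ → G)),
      IsZ2 ρ (fun σ a => σ • a) (fun σ g => σ • g) (fun g a => g • a) p.1 p.2 →
      IsZ2 ρ (fun σ a => σ • a) (fun σ g => σ • g) (fun g a => g • a)
        (wStar ρ (fun σ a => σ • a) (fun g a => g • a) w p).1
        (wStar ρ (fun σ a => σ • a) (fun g a => g • a) w p).2) ∧
    (∀ (g : G) (p : (Γ → Γ → A) × (Γ → G)),
      IsZ2 ρ (fun σ a => σ • a) (fun σ g => σ • g) (fun g a => g • a) p.1 p.2 →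
      IsZ2 ρ (fun σ a => σ • a) (fun σ g => σ • g) (fun g a => g • a)
        (gStar (fun σ g => σ • g) (fun g a => g • a) g p).1
        (gStar (fun σ g => σ • g) (fun g a => g • a) g p).2) ∧
    -- `1 ∈ Maps(Γ, A)` acts trivially, and the `Maps(Γ, A)`-action is associative
    (∀ p : (Γ → Γ → A) × (Γ → G),
      wStar ρ (fun σ a => σ • a) (fun g a => g • a) (1 : Γ → A) p = p) ∧
    (∀ (w w' : Γ → A) (p : (Γ → Γ → A) × (Γ → G)),
      wStar ρ (fun σ a => σ • a) (fun g a => g • a) (w * w') p =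
        wStar ρ (fun σ a => σ • a) (fun g a => g • a) w
          (wStar ρ (fun σ a => σ • a) (fun g a => g • a) w' p)) ∧
    -- `1 ∈ G` acts trivially, and the `G`-action is associative
    (∀ p : (Γ → Γ → A) × (Γ → G),
      gStar (fun σ g => σ • g) (fun g a => g • a) (1 : G) p = p) ∧
    (∀ (g g' : G) (p : (Γ → Γ → A) × (Γ → G)),
      gStar (fun σ g => σ • g) (fun g a => g • a) (g * g') p =
        gStar (fun σ g => σ • g) (fun g a => g • a) g
          (gStar (fun σ g => σ • g) (fun g a => g • a) g' p)) ∧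
    -- semidirect-product compatibility: `g ⋆ (w * p) = (g ⋆ w) * (g ⋆ p)`
    (∀ (g : G) (w : Γ → A) (p : (Γ → Γ → A) × (Γ → G)),
      gStar (fun σ g => σ • g) (fun g a => g • a) g
          (wStar ρ (fun σ a => σ • a) (fun g a => g • a) w p) =
        wStar ρ (fun σ a => σ • a) (fun g a => g • a) (fun σ => g • w σ)
          (gStar (fun σ g => σ • g) (fun g a => g • a) g p)) := by
  -- the Peiffer identity in the form used for rewriting
  have hP : ∀ a a' : A, ρ a • a' = a * a' * a⁻¹ := fun a a' => (hpeiffer a a').symm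
  refine ⟨?_, ?_, ?_, ?_, ?_, ?_, ?_⟩
  · rintro w ⟨u, ψ⟩ ⟨h1, h2⟩
    refine ⟨fun σ τ υ => ?_, fun σ τ => ?_⟩
    · have hu := h1 σ τ υ
      have hψ := h2 σ τ
      simp only [wStar] at hu hψ ⊢
      -- the only nontrivial term is `ψ (σ * τ) • (σ * τ) • w υ`, which the second cocycle
      -- condition and the Peiffer identity turn into a conjugate by `u σ τ`
      rw [hψ]
      simp only [smul_mul', smul_inv', mul_smul, hP, hcompat, mul_assoc, mul_inv_rev, inv_inv,
        inv_mul_cancel_left] at hu ⊢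
      simp only [← mul_assoc] at hu ⊢
      rw [mul_assoc (w _) (u _ _), mul_assoc (w _) (u _ _), hu]
    · have hψ := h2 σ τ
      simp only [wStar] at hψ ⊢
      rw [hψ]
      simp only [map_mul, map_inv, smul_mul', hρ_equiv, hρ_Γ]
      group
  · rintro g ⟨u, ψ⟩ ⟨h1, h2⟩
    refine ⟨fun σ τ υ => ?_, fun σ τ => ?_⟩
    · have hu := h1 σ τ υ
      simp only [gStar] at hu ⊢
      rw [← smul_mul', ← hu, smul_mul', hcompat, mul_smul, mul_smul, inv_smul_smul]
    · have hψ := h2 σ τ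
      simp only [gStar] at hψ ⊢
      rw [hψ]
      simp only [hρ_equiv, smul_mul', smul_inv', mul_smul]
      group
  · rintro ⟨u, ψ⟩
    simp [wStar]
  · rintro w w' ⟨u, ψ⟩
    ext σ τ
    · simp only [wStar, Pi.mul_apply, smul_mul', mul_smul, hP]
      group
    · simp [wStar, mul_assoc]
  · rintro ⟨u, ψ⟩
    simp [gStar]
  · rintro g g' ⟨u, ψ⟩
    ext σ τ
    · simp [gStar, mul_smul]
    · simp [gStar, smul_mul', mul_assoc]
  · rintro g w ⟨u, ψ⟩
    ext σ τ
    · simp only [gStar, wStar, smul_mul', smul_inv', mul_smul, hcompat, inv_smul_smul]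
    · simp only [gStar, wStar, hρ_equiv]
      group
end
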